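/- arXiv:1607.00181 — 5 statements merged into one kernel-verified Lean document; each statement's English description precedes it below -/
import Mathlib

section
/- Let H be a complex Hilbert space. The full unitary group U(H), equipped with the strong operator topology, is a bounded topological group: for every neighborhood U of the identity in U(H) (in the strong operator topology) there exists n ∈ ℕ such that every element of U(H) is a product of n elements of U. -/
open Pointwise

/-- The strong operator topology on the unitary group `U(H)` of a complex Hilbert space,
realized as the group of surjective linear isometries of `H`, i.e. the topology of
pointwise convergence on `H`. -/
noncomputable def strongOperatorTopology (H : Type*) [NormedAddCommGroup H]
    [InnerProductSpace ℂ H] : TopologicalSpace (H ≃ₗᵢ[ℂ] H) :=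
  TopologicalSpace.induced (fun u => (u : H → H)) Pi.topologicalSpace

lemma aux_finite_spectrum {V : Type*} [NormedAddCommGroup V] [InnerProductSpace ℂ V]
    [FiniteDimensional ℂ V] (w : V →L[ℂ] V) : (spectrum ℂ w).Finite := by
  have h := AlgEquiv.spectrum_eq (Module.End.toContinuousLinearMap (𝕜 := ℂ) V).symm w
  rw [← h]
  exact Module.End.finite_spectrum _

/-- n-th roots of unitaries in finite dimension, close to the identity. -/
lemma aux_root {V : Type*} [NormedAddCommGroup V] [InnerProductSpace ℂ V]
    [FiniteDimensional ℂ V] [CompleteSpace V] (n : ℕ) (hn : n ≠ 0) (w : unitary (V →L[ℂ] V)) :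
    ∃ r : unitary (V →L[ℂ] V), r ^ n = w ∧ ‖(r : V →L[ℂ] V) - 1‖ ≤ Real.pi / n := by
  have hn' : (0 : ℝ) < n := by positivity
  have hfin := aux_finite_spectrum (w : V →L[ℂ] V)
  have hcont : ∀ f : ℂ → ℂ, ContinuousOn f (spectrum ℂ (w : V →L[ℂ] V)) :=
    fun f => hfin.continuousOn f
  let f : ℂ → ℂ := fun z => Complex.exp (Complex.I * ((z.arg / n : ℝ) : ℂ))
  have hstar : IsStarNormal (w : V →L[ℂ] V) := inferInstance
  have hu : cfc f (w : V →L[ℂ] V) ∈ unitary (V →L[ℂ] V) := by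
    rw [cfc_unitary_iff f (w : V →L[ℂ] V) hstar (hcont f)]
    intro x _
    simp only [f, Complex.star_def, ← Complex.exp_conj, ← Complex.exp_add]
    simp
  refine ⟨⟨_, hu⟩, ?_, ?_⟩
  · apply Subtype.ext
    simp only [SubmonoidClass.mk_pow]
    rw [← cfc_pow f n (w : V →L[ℂ] V) (hcont f) hstar]
    conv_rhs => rw [← cfc_id ℂ (w : V →L[ℂ] V) hstar]
    apply cfc_congr
    intro z hz
    have hz1 : ‖z‖ = 1 := spectrum.norm_eq_one_of_unitary w.2 hz
    have h := Complex.norm_mul_exp_arg_mul_I z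
    rw [hz1] at h
    simp only [f, id, ← Complex.exp_nat_mul]
    rw [Complex.ofReal_one, one_mul] at h
    conv_rhs => rw [← h]
    congr 1
    have : (n : ℂ) ≠ 0 := by exact_mod_cast hn
    push_cast
    field_simp
  · change ‖cfc f (w : V →L[ℂ] V) - 1‖ ≤ _
    rw [← cfc_const_one ℂ (w : V →L[ℂ] V) hstar, ← cfc_sub f _ (w : V →L[ℂ] V) (hcont _) (hcont _)]
    refine norm_cfc_le (by positivity) fun z _ => ?_
    refine (Real.norm_exp_I_mul_ofReal_sub_one_le).trans ?_
    rw [Real.norm_eq_abs, abs_div, abs_of_pos hn']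
    gcongr
    exact Complex.abs_arg_le_pi z

/-- Extension of an operator on a subspace by the identity on the orthocomplement. -/
noncomputable def auxExt {H : Type*} [NormedAddCommGroup H] [InnerProductSpace ℂ H]
    [CompleteSpace H] (V : Submodule ℂ H) [CompleteSpace V] :
    (V →L[ℂ] V) →⋆* (H →L[ℂ] H) where
  toFun a := V.subtypeL ∘L a ∘L V.orthogonalProjectionOnto +
    (1 - V.subtypeL ∘L V.orthogonalProjectionOnto)
  map_one' := by ext x; simp
  map_mul' a b := by
    have h : ∀ y : V, V.orthogonalProjectionOnto (y : H) = y :=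
      V.orthogonalProjectionOnto_mem_subspace_eq_self
    ext x
    simp [Submodule.starProjection_apply, -Submodule.coe_orthogonalProjectionOnto_apply, h]
  map_star' a := by
    simp only [ContinuousLinearMap.star_eq_adjoint, map_add, map_sub,
      ContinuousLinearMap.adjoint_comp, Submodule.adjoint_subtypeL,
      Submodule.adjoint_orthogonalProjectionOnto]
    rw [← ContinuousLinearMap.star_eq_adjoint (1 : H →L[ℂ] H), star_one]
    rfl

lemma auxExt_apply {H : Type*} [NormedAddCommGroup H] [InnerProductSpace ℂ H]
    [CompleteSpace H] (V : Submodule ℂ H) [CompleteSpace V] (a : V →L[ℂ] V) (x : H) :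
    auxExt V a x = (a (V.orthogonalProjectionOnto x) : H) +
      (x - (V.orthogonalProjectionOnto x : H)) := rfl

lemma aux_agree {H : Type*} [NormedAddCommGroup H] [InnerProductSpace ℂ H]
    (F V : Submodule ℂ H) [FiniteDimensional ℂ V] (g : H ≃ₗᵢ[ℂ] H)
    (hF : F ≤ V) (hgF : ∀ x ∈ F, g x ∈ V) :
    ∃ w : V ≃ₗᵢ[ℂ] V, ∀ x (hx : x ∈ F), (w ⟨x, hF hx⟩ : H) = g x := by
  let S : Submodule ℂ V := F.comap V.subtype
  let L : S →ₗᵢ[ℂ] V :=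
    { toLinearMap := ((g.toLinearEquiv : H →ₗ[ℂ] H) ∘ₗ V.subtype ∘ₗ S.subtype).codRestrict V
        (fun s => hgF _ s.2)
      norm_map' := fun s => g.norm_map _ }
  refine ⟨L.extend.toLinearIsometryEquiv rfl, fun x hx => ?_⟩
  have := L.extend_apply ⟨⟨x, hF hx⟩, hx⟩
  simp only [LinearIsometry.coe_toLinearIsometryEquiv]
  rw [this]
  rfl

/-- The full unitary group `U(H)` of a complex Hilbert space `H`, with the
strong operator topology, is a bounded topological group: for every identity neighborhood `U`
there is `n ∈ ℕ` such that every element of `U(H)` is a product of `n` elements of `U`. -/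
theorem unitaryGroup_sot_bounded
    {H : Type*} [NormedAddCommGroup H] [InnerProductSpace ℂ H] [CompleteSpace H]
    (U : Set (H ≃ₗᵢ[ℂ] H)) (hU : U ∈ @nhds _ (strongOperatorTopology H) 1) :
    ∃ n : ℕ, ∀ g : H ≃ₗᵢ[ℂ] H, g ∈ U ^ n := by
  obtain ⟨I, hI, ε, hε, hsub⟩ : ∃ I : Set H, I.Finite ∧ ∃ ε : ℝ, 0 < ε ∧
      ∀ u : H ≃ₗᵢ[ℂ] H, (∀ x ∈ I, ‖u x - x‖ < ε) → u ∈ U := by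
    unfold strongOperatorTopology at hU
    rw [mem_nhds_induced] at hU
    obtain ⟨s, hs, hsU⟩ := hU
    rw [nhds_pi, Filter.mem_pi] at hs
    obtain ⟨I, hI, t, ht, hts⟩ := hs
    have h1 : ∀ x : H, ∃ ε > 0, Metric.ball x ε ⊆ t x := fun x => Metric.mem_nhds_iff.1 (ht x)
    choose e he het using h1
    obtain ⟨ε, hε, hle⟩ : ∃ ε : ℝ, 0 < ε ∧ ∀ x ∈ I, ε ≤ e x := by
      rcases I.eq_empty_or_nonempty with rfl | hne
      · exact ⟨1, one_pos, by simp⟩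
      · obtain ⟨y, _, hy⟩ := Set.exists_min_image I e hI hne
        exact ⟨e y, he y, hy⟩
    refine ⟨I, hI, ε, hε, fun u hu => hsU (hts fun x hx => het x ?_)⟩
    rw [Metric.mem_ball, dist_eq_norm]
    exact (hu x hx).trans_le (hle x hx)
  obtain ⟨M, hM⟩ := hI.isBounded.exists_norm_le
  obtain ⟨n, hn⟩ := exists_nat_gt (Real.pi * (|M| + 1) / ε)
  have hn0 : (0 : ℝ) < n := lt_of_le_of_lt (by positivity) hn
  have hn1 : n ≠ 0 := by rintro rfl; simp at hn0
  refine ⟨n + 1, fun g => ?_⟩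
  let F := Submodule.span ℂ I
  let V := F ⊔ F.map (g.toLinearEquiv : H →ₗ[ℂ] H)
  have : FiniteDimensional ℂ F := FiniteDimensional.span_of_finite ℂ hI
  have : FiniteDimensional ℂ V := 
    Submodule.finiteDimensional_sup _ _
  have hFV : F ≤ V := le_sup_left
  have hgV : ∀ x ∈ F, g x ∈ V := fun x hx =>
    (le_sup_right : _ ≤ V) (Submodule.mem_map_of_mem (f := (g.toLinearEquiv : H →ₗ[ℂ] H)) hx)
  obtain ⟨w, hw⟩ := aux_agree F V g hFV hgV
  obtain ⟨r, hr, hrn⟩ := aux_root n hn1 (Unitary.linearIsometryEquiv.symm w)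
  let R : H ≃ₗᵢ[ℂ] H := Unitary.linearIsometryEquiv (Unitary.map (auxExt V) r)
  have hRx : ∀ x, R x = auxExt V (r : V →L[ℂ] V) x := fun x => rfl
  have hRn : R ^ n = Unitary.linearIsometryEquiv
      (Unitary.map (auxExt V) (Unitary.linearIsometryEquiv.symm w)) := by
    rw [← hr, map_pow, map_pow]
  have hRU : R ∈ U := by
    apply hsub
    intro x hx
    have h1 : R x - x = (((r : V →L[ℂ] V) - 1) (V.orthogonalProjectionOnto x) : V) := by
      rw [hRx, auxExt_apply]
      simp only [ContinuousLinearMap.sub_apply, ContinuousLinearMap.one_apply,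
        Submodule.coe_sub]
      abel
    rw [h1, ← Submodule.coe_norm]
    have h2 : ‖V.orthogonalProjectionOnto x‖ ≤ ‖x‖ :=
      V.norm_orthogonalProjectionOnto_apply_le x
    calc _ ≤ ‖(r : V →L[ℂ] V) - 1‖ * ‖V.orthogonalProjectionOnto x‖ :=
          ContinuousLinearMap.le_opNorm _ _
      _ ≤ Real.pi / n * (|M| + 1) := by
          gcongr
          linarith [hM x hx, le_abs_self M]
      _ < ε := by
          rw [div_lt_iff₀ hε] at hn
          rw [div_mul_eq_mul_div, div_lt_iff₀ hn0]
          linarith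
  have hRF : ∀ x ∈ F, (R ^ n) x = g x := by
    intro x hx
    rw [hRn]
    change auxExt V _ x = _
    rw [auxExt_apply]
    have hp : V.orthogonalProjectionOnto x = ⟨x, hFV hx⟩ :=
      V.orthogonalProjectionOnto_mem_subspace_eq_self ⟨x, hFV hx⟩
    rw [hp, sub_self, add_zero]
    exact hw x hx
  have hk : (R ^ n)⁻¹ * g ∈ U := by
    apply hsub
    intro x hx
    have : ((R ^ n)⁻¹ * g) x = x := by
      change (R ^ n)⁻¹ (g x) = x
      rw [← hRF x (Submodule.subset_span hx)]
      exact (R ^ n).symm_apply_apply x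
    rw [this, sub_self, norm_zero]
    exact hε
  rw [pow_succ]
  exact Set.mem_mul.2 ⟨R ^ n, Set.pow_mem_pow hRU, _, hk, mul_inv_cancel_left _ _⟩
end

section
/- Let H be a complex Hilbert space. The group U_∞(H) consisting of all unitary operators u on H such that u − 1 is a compact operator, equipped with the operator-norm topology, is a bounded topological group: for every neighborhood U of the identity in U_∞(H) there exists n ∈ ℕ such that every element of U_∞(H) is a product of n elements of U. -/
open Pointwise

section UnitaryCompactHelpers

open Complex selfAdjoint

variable {H : Type*} [NormedAddCommGroup H] [InnerProductSpace ℂ H] [CompleteSpace H]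

lemma uc_compact_mul_left {T : H →L[ℂ] H} (hT : IsCompactOperator ⇑T) (R : H →L[ℂ] H) :
    IsCompactOperator ⇑(T * R) := hT.comp_clm R

lemma uc_mul_apply (A B : H →L[ℂ] H) (x : H) : (A * B) x = A (B x) := rfl

lemma uc_exp_sub_one {x : H →L[ℂ] H} (hx : IsCompactOperator ⇑x) :
    IsCompactOperator ⇑(NormedSpace.exp x - 1) := by
  have h := NormedSpace.exp_series_hasSum_exp' (𝕂 := ℂ) x
  have h1 := (hasSum_nat_add_iff' 1).mpr h
  simp only [Finset.range_one, Finset.sum_singleton, Nat.factorial_zero, Nat.cast_one, inv_one,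
    pow_zero, one_smul] at h1
  refine isCompactOperator_of_tendsto h1 (Filter.Eventually.of_forall fun s => ?_)
  change (∑ i ∈ s, ((i + 1).factorial⁻¹ : ℂ) • x ^ (i + 1)) ∈ compactOperator (RingHom.id ℂ) H H
  refine Submodule.sum_mem _ fun i _ => Submodule.smul_mem _ _ ?_
  rw [pow_succ']
  exact uc_compact_mul_left hx _

lemma uc_exp_proj {A : Type*} [CStarAlgebra A] {p : A} (hp : IsIdempotentElem p) (t : ℂ) :
    NormedSpace.exp (t • p) = 1 + (Complex.exp t - 1) • p := by
  have h := NormedSpace.exp_series_hasSum_exp' (𝕂 := ℂ) (t • p)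
  have h1 := (hasSum_nat_add_iff' 1).mpr h
  have k := NormedSpace.exp_series_hasSum_exp' (𝕂 := ℂ) t
  have k1 := ((hasSum_nat_add_iff' 1).mpr k).smul_const p
  simp only [Finset.range_one, Finset.sum_singleton, Nat.factorial_zero, Nat.cast_one, inv_one,
    pow_zero, one_smul] at h1 k1
  rw [← Complex.exp_eq_exp_ℂ] at k1
  have e : (fun n : ℕ => ((n + 1).factorial⁻¹ : ℂ) • (t • p) ^ (n + 1)) =
      fun n : ℕ => (((n + 1).factorial⁻¹ : ℂ) • t ^ (n + 1)) • p := by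
    funext n
    rw [smul_pow, hp.pow_succ_eq, smul_assoc]
  rw [e] at h1
  have := h1.unique k1
  rw [← this]; abel

lemma uc_expUnitary_pow {A : Type*} [CStarAlgebra A] (a : selfAdjoint A) (n : ℕ) :
    expUnitary (n • a) = expUnitary a ^ n := by
  induction n with
  | zero => simp
  | succ k ih =>
    rw [succ_nsmul, pow_succ, ← ih, Commute.expUnitary_add]
    simp

/-- the key lemma: exponentials of compact self-adjoint operators of norm at most `π`. -/
lemma uc_exp_mem {S U : Set (unitary (H →L[ℂ] H))}
    (hS : S = {u : unitary (H →L[ℂ] H) | IsCompactOperator (⇑((u : H →L[ℂ] H) - 1))})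
    (hU : U ∈ nhdsWithin 1 S) :
    ∃ n : ℕ, ∀ a : selfAdjoint (H →L[ℂ] H), IsCompactOperator ⇑(a : H →L[ℂ] H) →
      ‖a‖ ≤ Real.pi → expUnitary a ∈ U ^ n := by
  rw [mem_nhdsWithin_iff_exists_mem_nhds_inter] at hU
  obtain ⟨V, hV, hVU⟩ := hU
  have hc : Filter.Tendsto (expUnitary : selfAdjoint (H →L[ℂ] H) → _) (nhds 0) (nhds 1) := by
    have := (continuous_expUnitary (A := H →L[ℂ] H)).tendsto 0
    rwa [expUnitary_zero] at this
  obtain ⟨δ, hδ, hball⟩ := Metric.mem_nhds_iff.mp (hc hV)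
  obtain ⟨n, hn⟩ := exists_nat_gt (Real.pi / δ)
  have hn0 : (0 : ℝ) < n := lt_of_le_of_lt (by positivity) hn
  refine ⟨n, fun a ha hna => ?_⟩
  set b : selfAdjoint (H →L[ℂ] H) := (n : ℝ)⁻¹ • a with hb
  have hbc : (b : H →L[ℂ] H) = (n : ℂ)⁻¹ • (a : H →L[ℂ] H) := by
    have h1 : (b : H →L[ℂ] H) = (n : ℝ)⁻¹ • (a : H →L[ℂ] H) := rfl
    have h2 : (n : ℂ)⁻¹ = (((n : ℝ)⁻¹ : ℝ) : ℂ) := by push_cast; rfl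
    rw [h1, h2]
    rfl
  have hbn : ‖b‖ = (n : ℝ)⁻¹ * ‖a‖ := by
    change ‖(b : H →L[ℂ] H)‖ = _ * ‖(a : H →L[ℂ] H)‖
    rw [hbc, norm_smul, norm_inv, Complex.norm_natCast]
  have hab : n • b = a := by
    apply Subtype.ext
    have h1 : ((n • b : selfAdjoint (H →L[ℂ] H)) : H →L[ℂ] H) = n • (b : H →L[ℂ] H) := rfl
    have h2 : (n : ℂ) ≠ 0 := by exact_mod_cast hn0.ne'
    rw [h1, hbc, ← Nat.cast_smul_eq_nsmul ℂ, smul_inv_smul₀ h2]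
  rw [← hab, uc_expUnitary_pow]
  refine Set.pow_mem_pow (hVU ⟨hball ?_, ?_⟩)
  · rw [mem_ball_zero_iff, hbn]
    rw [div_lt_iff₀ hδ] at hn
    rw [inv_mul_lt_iff₀ hn0]
    linarith
  · rw [hS]
    change IsCompactOperator _
    rw [expUnitary_coe]
    refine uc_exp_sub_one ?_
    have : I • (b : H →L[ℂ] H) = (I * (n : ℂ)⁻¹) • (a : H →L[ℂ] H) := by
      rw [mul_smul, hbc]
    rw [this]
    exact ha.smul _

lemma uc_arg_compact (v : unitary (H →L[ℂ] H)) (hv : ‖(v - 1 : H →L[ℂ] H)‖ < 2)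
    (hc : IsCompactOperator ⇑(v - 1 : H →L[ℂ] H)) :
    IsCompactOperator ⇑(Unitary.argSelfAdjoint v : H →L[ℂ] H) := by
  have hs := (Unitary.spectrum_subset_slitPlane_iff_norm_lt_two v.2).mpr hv
  have hd : ContinuousOn (dslope Complex.log 1) slitPlane :=
    (continuousOn_dslope (isOpen_slitPlane.mem_nhds (by simp))).mpr
      ⟨fun z hz => (differentiableAt_log hz).continuousAt.continuousWithinAt,
        differentiableAt_log (by simp)⟩
  have hd' := hd.mono hs
  have key : (Unitary.argSelfAdjoint v : H →L[ℂ] H) =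
      (v - 1 : H →L[ℂ] H) * cfc (fun z => -I * dslope Complex.log 1 z) (v : H →L[ℂ] H) := by
    have e1 : (v - 1 : H →L[ℂ] H) = cfc (fun z : ℂ => z - 1) (v : H →L[ℂ] H) := by
      rw [cfc_sub _ _, cfc_id' ℂ _, cfc_const_one ℂ _]
    rw [e1, ← cfc_mul _ _ _ (by fun_prop) (by fun_prop), Unitary.argSelfAdjoint_coe]
    refine cfc_congr fun z hz => ?_
    have hz1 : ‖z‖ = 1 := by
      simpa using spectrum.subset_circle_of_unitary v.2 hz
    have := sub_smul_dslope Complex.log 1 z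
    simp only [smul_eq_mul, log_one, sub_zero] at this
    have h2 : (z - 1) * (-I * dslope Complex.log 1 z) = -I * Complex.log z := by
      rw [← this]; ring
    simp only [h2, Complex.log, hz1, Real.log_one, ofReal_zero, zero_add]
    linear_combination (arg z : ℂ) * I_mul_I
  rw [key]
  exact uc_compact_mul_left hc _

end UnitaryCompactHelpers

/-- The group `U_∞(H)` of unitary operators `u` on a complex Hilbert space `H`
with `u - 1` compact, endowed with the operator-norm topology (as a subspace of the unitary
group of `H`, which itself carries the norm topology), is a bounded topological group: for
every neighborhood `U` of the identity in `U_∞(H)` there is `n ∈ ℕ` such that every element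
of `U_∞(H)` is a product of `n` elements of `U`. -/
theorem unitaryCompactPerturbation_bounded
    {H : Type*} [NormedAddCommGroup H] [InnerProductSpace ℂ H] [CompleteSpace H]
    -- the carrier of `U_∞(H)` inside the full unitary group (with the norm topology):
    (S : Set (unitary (H →L[ℂ] H)))
    (hS : S = {u : unitary (H →L[ℂ] H) | IsCompactOperator (⇑((u : H →L[ℂ] H) - 1))})
    -- `U` is a neighborhood of the identity in the subspace topology of `U_∞(H)`:
    (U : Set (unitary (H →L[ℂ] H))) (hUS : U ⊆ S) (hU : U ∈ nhdsWithin 1 S) :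
    ∃ n : ℕ, ∀ g ∈ S, g ∈ U ^ n := by
  classical
  obtain ⟨n, hn⟩ := uc_exp_mem hS hU
  refine ⟨n + n, fun g hg => ?_⟩
  have hgc : IsCompactOperator (⇑((g : H →L[ℂ] H) - 1)) := by rw [hS] at hg; exact hg
  set E : Submodule ℂ H := LinearMap.ker ((g : H →L[ℂ] H) + 1 : H →L[ℂ] H).toLinearMap with hE
  have hEmem : ∀ x, x ∈ E ↔ (g : H →L[ℂ] H) x = -x := by
    intro x
    simp [hE, LinearMap.mem_ker, add_eq_zero_iff_eq_neg]
  have : CompleteSpace E :=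
    (((g : H →L[ℂ] H) + 1 : H →L[ℂ] H).isClosed_ker).completeSpace_coe
  set P : H →L[ℂ] H := E.starProjection with hP
  have hPE : ∀ x, P x ∈ E := fun x => by
    rw [hP]; exact E.starProjection_apply_mem x
  have hgP : ∀ x, (g : H →L[ℂ] H) (P x) = -P x := fun x => (hEmem _).mp (hPE x)
  have hPc : IsCompactOperator ⇑P := by
    have : P = (-(1 / 2 : ℂ)) • (((g : H →L[ℂ] H) - 1) * P) := by
      ext x
      simp only [smul_apply, uc_mul_apply,
        sub_apply, one_apply_eq_self, hgP]
      module
    rw [this]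
    exact (uc_compact_mul_left hgc P).smul _
  have hPsa : IsSelfAdjoint P := isSelfAdjoint_starProjection E
  let p : selfAdjoint (H →L[ℂ] H) := ⟨P, hPsa⟩
  let a : selfAdjoint (H →L[ℂ] H) := Real.pi • p
  have hacoe : (a : H →L[ℂ] H) = (Real.pi : ℂ) • P := by
    ext x; simp [a, p]
  have hac : IsCompactOperator ⇑(a : H →L[ℂ] H) := by
    rw [hacoe]; exact hPc.smul _
  have han : ‖a‖ ≤ Real.pi := by
    have h1 : ‖a‖ = ‖(a : H →L[ℂ] H)‖ := rfl
    rw [h1, hacoe, norm_smul, Complex.norm_real, Real.norm_of_nonneg Real.pi_pos.le]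
    have := E.starProjection_norm_le
    nlinarith [Real.pi_pos]
  set u := selfAdjoint.expUnitary a with hu
  have hucoe : (u : H →L[ℂ] H) = 1 - (2 : ℂ) • P := by
    rw [hu, selfAdjoint.expUnitary_coe, hacoe, smul_smul,
      uc_exp_proj E.isIdempotentElem_starProjection, mul_comm, Complex.exp_pi_mul_I]
    module
  have huu : u * u = 1 := by
    ext1
    have h2 : P * P = P := E.isIdempotentElem_starProjection
    simp only [Submonoid.coe_mul, hucoe, sub_mul, mul_sub, one_mul, mul_one, smul_mul_assoc,
      mul_smul_comm, h2, OneMemClass.coe_one]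
    module
  set v := g * u with hv
  have hvc : IsCompactOperator (⇑((v : H →L[ℂ] H) - 1)) := by
    have : (v : H →L[ℂ] H) - 1 = ((g : H →L[ℂ] H) - 1) + (2 : ℂ) • P := by
      ext x
      simp only [hv, Submonoid.coe_mul, hucoe, smul_apply,
        uc_mul_apply, add_apply, map_sub, map_smul,
        sub_apply, one_apply_eq_self, hgP]
      module
    rw [this]
    exact hgc.add (hPc.smul _)
  have hspec : (-1 : ℂ) ∉ spectrum ℂ (v : H →L[ℂ] H) := by
    intro hmem
    have hmem2 : (-2 : ℂ) ∈ spectrum ℂ ((v : H →L[ℂ] H) - 1) := by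
      rw [spectrum.mem_iff] at hmem ⊢
      convert hmem using 2
      rw [Algebra.algebraMap_eq_smul_one, Algebra.algebraMap_eq_smul_one]
      module
    rw [← hvc.hasEigenvalue_iff_mem_spectrum (by norm_num)] at hmem2
    obtain ⟨x, hx⟩ := hmem2.exists_hasEigenvector
    have hx1 := hx.apply_eq_smul
    simp only [ContinuousLinearMap.coe_coe, hv, Submonoid.coe_mul, hucoe,
      smul_apply,
      uc_mul_apply, add_apply, map_sub, map_smul,
      sub_apply, one_apply_eq_self, hgP] at hx1
    have hx2 : (g : H →L[ℂ] H) x = - x - (2 : ℂ) • P x := by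
      have h8 : (g : H →L[ℂ] H) x = ((g : H →L[ℂ] H) x - (2 : ℂ) • -P x - x) + x - (2 : ℂ) • P x := by
        module
      rw [h8, hx1]
      module
    have hstar : star (g : H →L[ℂ] H) (P x) = - P x := by
      have h3 : (star (g : H →L[ℂ] H) * (g : H →L[ℂ] H)) (P x) = P x := by
        rw [Unitary.coe_star_mul_self]; rfl
      rw [uc_mul_apply, hgP, map_neg] at h3
      rw [← h3, neg_neg, h3]
    have h4 : inner ℂ (P x) ((g : H →L[ℂ] H) x) = - inner ℂ (P x) x := by
      rw [← ContinuousLinearMap.adjoint_inner_left, ← ContinuousLinearMap.star_eq_adjoint, hstar,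
        inner_neg_left]
    rw [hx2, inner_sub_right, inner_neg_right, inner_smul_right] at h4
    have h5 : inner ℂ (P x) (P x) = 0 := by linear_combination (-1/2 : ℂ) * h4
    have h6 : P x = 0 := inner_self_eq_zero.mp h5
    rw [h6] at hx2
    have hxE : x ∈ E := (hEmem x).mpr (by simpa using hx2)
    have h7 : P x = x := Submodule.starProjection_eq_self_iff.mpr hxE
    exact hx.2 (h7.symm.trans h6)
  have hv2 : ‖(v - 1 : H →L[ℂ] H)‖ < 2 := (Unitary.norm_sub_one_lt_two_iff v.2).mpr hspec
  have hvU : v ∈ U ^ n := by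
    rw [← expUnitary_argSelfAdjoint hv2]
    exact hn _ (uc_arg_compact v hv2 hvc) (Unitary.norm_argSelfAdjoint_le_pi v)
  have hg2 : g = v * u := by rw [hv, mul_assoc, huu, mul_one]
  rw [hg2, pow_add]
  exact Set.mul_mem_mul hvU (hn a hac han)
end

section
/- Let H be a complex Hilbert space and let G = U(H) be the full unitary group of H equipped with the strong operator topology. Then for every continuous unitary representation (π,K) of G on a complex Hilbert space K, every continuous 1-cocycle β : G → K is a 1-coboundary, i.e. H¹(G,π,K) = {0}. -/
open Filter Topology

section Helpers

/-- Extend a unitary of a subspace `T` by the identity on the orthogonal complement. -/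
noncomputable def extU {H : Type*} [NormedAddCommGroup H] [InnerProductSpace ℂ H]
    (T : Submodule ℂ H) [T.HasOrthogonalProjection] (k : T ≃ₗᵢ[ℂ] T) : H ≃ₗᵢ[ℂ] H where
  toFun x := (k (T.orthogonalProjectionOnto x) : H) + (x - T.orthogonalProjectionOnto x)
  invFun x := (k.symm (T.orthogonalProjectionOnto x) : H) + (x - T.orthogonalProjectionOnto x)
  map_add' x y := by
    simp only [map_add, Submodule.coe_add]; abel
  map_smul' c x := by
    simp only [map_smul, Submodule.coe_smul, RingHom.id_apply, smul_add, smul_sub]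
  left_inv x := by
    have hz : T.orthogonalProjectionOnto (x - T.orthogonalProjectionOnto x) = 0 :=
      Submodule.orthogonalProjectionOnto_eq_zero_iff.2
        (T.sub_starProjection_mem_orthogonal x)
    have hm : ∀ a : T, T.orthogonalProjectionOnto (a : H) = a := fun a => by simp
    simp only [map_add, hz, hm, add_zero, LinearIsometryEquiv.symm_apply_apply,
      LinearIsometryEquiv.apply_symm_apply]
    abel
  right_inv x := by
    have hz : T.orthogonalProjectionOnto (x - T.orthogonalProjectionOnto x) = 0 :=
      Submodule.orthogonalProjectionOnto_eq_zero_iff.2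
        (T.sub_starProjection_mem_orthogonal x)
    have hm : ∀ a : T, T.orthogonalProjectionOnto (a : H) = a := fun a => by simp
    simp only [map_add, hz, hm, add_zero, LinearIsometryEquiv.symm_apply_apply,
      LinearIsometryEquiv.apply_symm_apply]
    abel
  norm_map' x := by
    have h0 : ∀ a : T, ‖(a : H) + (x - T.orthogonalProjectionOnto x)‖ ^ 2
        = ‖a‖ ^ 2 + ‖x - T.orthogonalProjectionOnto x‖ ^ 2 := by
      intro a
      have hin : inner ℂ (a : H) (x - T.orthogonalProjectionOnto x) = 0 :=
        Submodule.inner_right_of_mem_orthogonal a.2 (T.sub_starProjection_mem_orthogonal x)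
      have := norm_add_sq_eq_norm_sq_add_norm_sq_of_inner_eq_zero (𝕜 := ℂ) _ _ hin
      simpa [sq] using this
    have h1 := h0 (k (T.orthogonalProjectionOnto x))
    have h2 := h0 (T.orthogonalProjectionOnto x)
    rw [add_sub_cancel, ← k.norm_map, ← h1] at h2
    exact ((sq_eq_sq₀ (norm_nonneg _) (norm_nonneg _)).1 h2).symm

variable {H : Type*} [NormedAddCommGroup H] [InnerProductSpace ℂ H]

theorem extU_apply (T : Submodule ℂ H) [T.HasOrthogonalProjection] (k : T ≃ₗᵢ[ℂ] T) (x : H) :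
    extU T k x = (k (T.orthogonalProjectionOnto x) : H) + (x - T.orthogonalProjectionOnto x) := rfl

theorem extU_mem (T : Submodule ℂ H) [T.HasOrthogonalProjection] (k : T ≃ₗᵢ[ℂ] T) (x : T) :
    extU T k x = k x := by
  simp [extU_apply]

theorem extU_orth (T : Submodule ℂ H) [T.HasOrthogonalProjection] (k : T ≃ₗᵢ[ℂ] T) (x : H)
    (hx : x ∈ Tᗮ) : extU T k x = x := by
  have : T.orthogonalProjectionOnto x = 0 := by
    simpa using hx
  simp [extU_apply, this]

theorem exists_extU (S T : Submodule ℂ H) [FiniteDimensional ℂ T] (hST : S ≤ T)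
    (j : S →ₗᵢ[ℂ] H) (hj : ∀ x, j x ∈ T) :
    ∃ k : T ≃ₗᵢ[ℂ] T, ∀ x : S, extU T k x = j x := by
  let S' : Submodule ℂ T := S.comap T.subtype
  let L : S' →ₗᵢ[ℂ] T :=
    { toFun := fun x => ⟨j ⟨x.1.1, x.2⟩, hj _⟩
      map_add' := by
        intro x y
        ext
        exact map_add j ⟨x.1.1, x.2⟩ ⟨y.1.1, y.2⟩
      map_smul' := by
        intro c x
        ext
        exact map_smul j c ⟨x.1.1, x.2⟩
      norm_map' := by
        intro x
        exact j.norm_map ⟨x.1.1, x.2⟩ }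
  refine ⟨L.extend.toLinearIsometryEquiv rfl, fun x => ?_⟩
  have h1 := extU_mem T (L.extend.toLinearIsometryEquiv rfl) ⟨x.1, hST x.2⟩
  have h2 := L.extend_apply ⟨⟨x.1, hST x.2⟩, x.2⟩
  refine h1.trans ?_
  rw [LinearIsometry.toLinearIsometryEquiv_apply]
  exact congrArg Subtype.val h2

theorem exists_isometry_of_finrank_le (S F : Submodule ℂ H) [FiniteDimensional ℂ S]
    [FiniteDimensional ℂ F] (h : Module.finrank ℂ S ≤ Module.finrank ℂ F) :
    ∃ j : S →ₗᵢ[ℂ] H, ∀ x, j x ∈ F := by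
  let b := stdOrthonormalBasis ℂ S
  let c := stdOrthonormalBasis ℂ F
  let f : S →ₗ[ℂ] F := b.toBasis.constr ℂ (fun i => c (Fin.castLE h i))
  have hf : Orthonormal ℂ (f ∘ b.toBasis) := by
    have : f ∘ b.toBasis = c ∘ Fin.castLE h := by
      ext i
      simp [f]
    rw [this]
    exact c.orthonormal.comp _ (Fin.castLE_injective h)
  have hb : Orthonormal ℂ b.toBasis := by simpa using b.orthonormal
  exact ⟨F.subtypeₗᵢ.comp (f.isometryOfOrthonormal hb hf), fun x => Subtype.property _⟩

theorem exists_absorbing (F : Submodule ℂ H) [FiniteDimensional ℂ F] :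
    ∃ E : Submodule ℂ H, FiniteDimensional ℂ E ∧ F ≤ E ∧ ∀ u : H ≃ₗᵢ[ℂ] H,
      ∃ w : H ≃ₗᵢ[ℂ] H, (∀ x ∈ F, w x = x) ∧ ∀ x ∈ F, w (u x) ∈ E := by
  by_cases hfin : FiniteDimensional ℂ Fᗮ
  · refine ⟨F ⊔ Fᗮ, inferInstance, le_sup_left, fun u => ⟨1, fun x _ => rfl, fun x _ => ?_⟩⟩
    rw [Submodule.sup_orthogonal_of_hasOrthogonalProjection]
    trivial
  · have hr : ((Module.finrank ℂ F : ℕ) : Cardinal) ≤ Module.rank ℂ Fᗮ := by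
      by_contra hcon
      push Not at hcon
      apply hfin
      exact Module.rank_lt_aleph0_iff.1 (hcon.trans (Cardinal.natCast_lt_aleph0))
    obtain ⟨s, hs, hli⟩ := exists_finset_linearIndependent_of_le_rank hr
    let F0 : Submodule ℂ Fᗮ := Submodule.span ℂ (s : Set Fᗮ)
    let F' : Submodule ℂ H := F0.map Fᗮ.subtype
    have hF0 : Module.finrank ℂ F0 = Module.finrank ℂ F := by
      rw [← hs]; exact finrank_span_finset_eq_card hli
    have : FiniteDimensional ℂ F0 := FiniteDimensional.span_finset ℂ s
    have hfF' : FiniteDimensional ℂ F' := inferInstance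
    have hF' : Module.finrank ℂ F' = Module.finrank ℂ F := by
      rw [← hF0]
      exact (Submodule.equivMapOfInjective _ Fᗮ.injective_subtype F0).finrank_eq.symm
    have hF'o : F' ≤ Fᗮ := Submodule.map_subtype_le _ _
    refine ⟨F ⊔ F', inferInstance, le_sup_left, fun u => ?_⟩
    let q : H →ₗ[ℂ] H := (Fᗮ.starProjection : H →ₗ[ℂ] H) ∘ₗ (u.toLinearEquiv : H →ₗ[ℂ] H)
    let S0 : Submodule ℂ H := F.map q
    have hS0 : Module.finrank ℂ S0 ≤ Module.finrank ℂ F' := by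
      rw [hF']; exact Submodule.finrank_map_le _ _
    have hS0o : S0 ≤ Fᗮ := by
      rintro _ ⟨x, _, rfl⟩
      exact Fᗮ.starProjection_apply_mem _
    obtain ⟨j, hj⟩ := exists_isometry_of_finrank_le S0 F' hS0
    obtain ⟨k, hk⟩ := exists_extU S0 (S0 ⊔ F') le_sup_left j
      (fun x => Submodule.mem_sup_right (hj x))
    have hfix : ∀ x ∈ F, extU (S0 ⊔ F') k x = x := by
      intro x hx
      apply extU_orth
      have h1 : S0 ⊔ F' ≤ Fᗮ := sup_le hS0o hF'o
      exact Submodule.orthogonal_le h1 (Submodule.le_orthogonal_orthogonal F hx)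
    refine ⟨extU (S0 ⊔ F') k, hfix, fun x hx => ?_⟩
    have hdec := F.starProjection_add_starProjection_orthogonal (u x)
    rw [← hdec, map_add]
    refine add_mem (Submodule.mem_sup_left ?_) (Submodule.mem_sup_right ?_)
    · rw [hfix _ (F.starProjection_apply_mem _)]
      exact F.starProjection_apply_mem _
    · have := hk ⟨Fᗮ.starProjection (u x), ⟨x, hx, rfl⟩⟩
      simp only at this
      rw [this]
      exact hj _

theorem continuous_extU (T : Submodule ℂ H) [FiniteDimensional ℂ T] :
    @Continuous _ _ _ (strongOperatorTopology H)
      (fun A : unitary (T →L[ℂ] T) => extU T (Unitary.linearIsometryEquiv A)) := by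
  refine continuous_induced_rng.2 (continuous_pi fun x => ?_)
  have : Continuous fun A : unitary (T →L[ℂ] T) =>
      (((A : T →L[ℂ] T) (T.orthogonalProjectionOnto x) : T) : H)
        + (x - T.orthogonalProjectionOnto x) := by
    fun_prop
  exact this

theorem compactSpace_unitary (T : Type*) [NormedAddCommGroup T] [InnerProductSpace ℂ T]
    [FiniteDimensional ℂ T] [CompleteSpace T] :
    CompactSpace (unitary (T →L[ℂ] T)) := by
  have : ProperSpace (T →L[ℂ] T) := FiniteDimensional.proper ℂ (T →L[ℂ] T)
  have hcl : IsClosed (unitary (T →L[ℂ] T) : Set (T →L[ℂ] T)) := isClosed_unitary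
  have hbd : Bornology.IsBounded (unitary (T →L[ℂ] T) : Set (T →L[ℂ] T)) := by
    refine (Metric.isBounded_closedBall (x := (0 : T →L[ℂ] T)) (r := 1)).subset ?_
    intro A hA
    rw [mem_closedBall_zero_iff]
    refine ContinuousLinearMap.opNorm_le_bound _ zero_le_one fun x => ?_
    rw [one_mul]
    exact (((Unitary.linearIsometryEquiv (⟨A, hA⟩ : unitary (T →L[ℂ] T))).norm_map x)).le
  exact isCompact_iff_compactSpace.1 (Metric.isCompact_of_isClosed_isBounded hcl hbd)

variable {K : Type*} [NormedAddCommGroup K] [InnerProductSpace ℂ K]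

theorem bounded_on_extU (T : Submodule ℂ H) [FiniteDimensional ℂ T]
    (β : (H ≃ₗᵢ[ℂ] H) → K) (hβcont : @Continuous _ _ (strongOperatorTopology H) _ β) :
    ∃ C : ℝ, ∀ k : T ≃ₗᵢ[ℂ] T, ‖β (extU T k)‖ ≤ C := by
  have := compactSpace_unitary T
  have hc : Continuous fun A : unitary (T →L[ℂ] T) => β (extU T (Unitary.linearIsometryEquiv A)) :=
    @Continuous.comp _ _ _ _ (strongOperatorTopology H) _ _ _ hβcont (continuous_extU T)
  obtain ⟨C, hC⟩ := (isCompact_range hc).isBounded.exists_norm_le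
  refine ⟨C, fun k => ?_⟩
  have := hC _ ⟨Unitary.linearIsometryEquiv.symm k, rfl⟩
  simpa using this

theorem cocycle_bounded (π : (H ≃ₗᵢ[ℂ] H) →* (K ≃ₗᵢ[ℂ] K))
    (β : (H ≃ₗᵢ[ℂ] H) → K) (hβcont : @Continuous _ _ (strongOperatorTopology H) _ β)
    (hβcoc : ∀ g h : H ≃ₗᵢ[ℂ] H, β (g * h) = β g + π g (β h)) :
    ∃ C : ℝ, ∀ g, ‖β g‖ ≤ C := by
  have hβ1 : β 1 = 0 := by
    have := hβcoc 1 1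
    simpa using this
  have hmul : ∀ g h, ‖β (g * h)‖ ≤ ‖β g‖ + ‖β h‖ := by
    intro g h
    rw [hβcoc]
    exact (norm_add_le _ _).trans_eq (by rw [LinearIsometryEquiv.norm_map])
  have hF : ∃ F : Submodule ℂ H, FiniteDimensional ℂ F ∧
      ∀ g : H ≃ₗᵢ[ℂ] H, (∀ x ∈ F, g x = x) → ‖β g‖ ≤ 1 := by
    have ho : @IsOpen _ (strongOperatorTopology H) (β ⁻¹' Metric.ball 0 1) :=
      @IsOpen.preimage _ _ (strongOperatorTopology H) _ _ hβcont _ Metric.isOpen_ball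
    obtain ⟨U, hU, hUe⟩ := isOpen_induced_iff.1 ho
    have h1 : ((1 : H ≃ₗᵢ[ℂ] H) : H → H) ∈ U := by
      have : (1 : H ≃ₗᵢ[ℂ] H) ∈ β ⁻¹' Metric.ball 0 1 := by simp [hβ1]
      rw [← hUe] at this
      exact this
    obtain ⟨I, t, ht, hsub⟩ := isOpen_pi_iff.1 hU _ h1
    refine ⟨Submodule.span ℂ (I : Set H), FiniteDimensional.span_finset ℂ I, fun g hg => ?_⟩
    have : (g : H → H) ∈ U := by
      apply hsub
      intro x hx
      rw [hg x (Submodule.subset_span hx)]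
      exact (ht x hx).2
    have h2 : g ∈ β ⁻¹' Metric.ball 0 1 := by
      rw [← hUe]; exact this
    have h3 : ‖β g‖ < 1 := by simpa using h2
    exact h3.le
  obtain ⟨F, hFfin, hF⟩ := hF
  obtain ⟨E, hEfin, hFE, hE⟩ := exists_absorbing F
  obtain ⟨C, hC⟩ := bounded_on_extU E β hβcont
  refine ⟨1 + (C + 1), fun u => ?_⟩
  obtain ⟨w, hw, hwu⟩ := hE u
  obtain ⟨k, hk⟩ := exists_extU F E hFE
    ((w * u : H ≃ₗᵢ[ℂ] H).toLinearIsometry.comp F.subtypeₗᵢ) (fun x => hwu x x.2)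
  set κ := extU E k with hκ
  have hu : u = w⁻¹ * (κ * (κ⁻¹ * (w * u))) := by group
  have hwi : ‖β w⁻¹‖ ≤ 1 := by
    apply hF
    intro x hx
    have : w.symm (w x) = x := w.symm_apply_apply x
    rw [hw x hx] at this
    exact this
  have hs : ‖β (κ⁻¹ * (w * u))‖ ≤ 1 := by
    apply hF
    intro x hx
    have h1 : κ x = (w * u) x := hk ⟨x, hx⟩
    have h2 : κ.symm (κ x) = x := κ.symm_apply_apply x
    rw [h1] at h2
    exact h2
  rw [hu]
  refine (hmul _ _).trans (add_le_add hwi ((hmul _ _).trans (add_le_add (hC k) hs)))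

theorem fixed_of_bounded [CompleteSpace K] {G : Type*} [Group G] (π : G →* (K ≃ₗᵢ[ℂ] K))
    (β : G → K) (hβcoc : ∀ g h : G, β (g * h) = β g + π g (β h))
    (hb : ∃ C : ℝ, ∀ g, ‖β g‖ ≤ C) : ∃ v : K, ∀ g : G, β g = π g v - v := by
  obtain ⟨C, hC⟩ := hb
  -- squared radii of balls containing the orbit
  let A : Set ℝ := {r | ∃ x : K, ∀ g, ‖x - β g‖ ^ 2 ≤ r}
  have hA0 : ∀ r ∈ A, 0 ≤ r := fun r ⟨x, hx⟩ => (sq_nonneg _).trans (hx 1)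
  have hAne : A.Nonempty := ⟨C ^ 2, 0, fun g => by
    rw [zero_sub, norm_neg]
    exact pow_le_pow_left₀ (norm_nonneg _) (hC g) 2⟩
  have hAb : BddBelow A := ⟨0, hA0⟩
  let r := sInf A
  have key : ∀ (x y : K) (a b : ℝ), (∀ g, ‖x - β g‖ ^ 2 ≤ a) → (∀ g, ‖y - β g‖ ^ 2 ≤ b) →
      ‖x - y‖ ^ 2 ≤ 2 * (a - r) + 2 * (b - r) := by
    intro x y a b hx hy
    have hm : (2 * a + 2 * b - ‖x - y‖ ^ 2) / 4 ∈ A := by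
      refine ⟨(2⁻¹ : ℂ) • (x + y), fun g => ?_⟩
      have hp := parallelogram_law_with_norm ℂ (x - β g) (y - β g)
      have e1 : x - β g + (y - β g) = (2 : ℂ) • ((2⁻¹ : ℂ) • (x + y) - β g) := by
        rw [smul_sub, smul_smul]
        norm_num
        rw [two_smul]; abel
      have e2 : x - β g - (y - β g) = x - y := by abel
      rw [e1, e2, norm_smul] at hp
      have h2 : ‖(2 : ℂ)‖ = 2 := by simp
      rw [h2] at hp
      have := hx g
      have := hy g
      nlinarith
    have := csInf_le hAb hm
    change r ≤ _ at this
    linarith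
  have hseq : ∀ n : ℕ, ∃ x : K, ∀ g, ‖x - β g‖ ^ 2 ≤ r + 1 / ((n : ℝ) + 1) := by
    intro n
    have hpos : (0 : ℝ) < 1 / ((n : ℝ) + 1) := by positivity
    obtain ⟨a, ⟨x, hx⟩, ha⟩ := exists_lt_of_csInf_lt hAne (lt_add_of_pos_right r hpos)
    exact ⟨x, fun g => (hx g).trans ha.le⟩
  choose s hs using hseq
  have hlim : Tendsto (fun n : ℕ => 1 / ((n : ℝ) + 1)) atTop (𝓝 0) :=
    tendsto_one_div_add_atTop_nhds_zero_nat
  have hcau : CauchySeq s := by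
    refine cauchySeq_of_le_tendsto_0' (fun n => √(4 * (1 / ((n : ℝ) + 1)))) ?_ ?_
    · intro n m hnm
      rw [dist_eq_norm]
      apply Real.le_sqrt_of_sq_le
      have h1 := key _ _ _ _ (hs n) (hs m)
      have h2 : 1 / ((m : ℝ) + 1) ≤ 1 / ((n : ℝ) + 1) := by gcongr
      linarith
    · have := (hlim.const_mul 4).sqrt
      simpa using this
  obtain ⟨a, ha⟩ := cauchySeq_tendsto_of_complete hcau
  have har : ∀ g, ‖a - β g‖ ^ 2 ≤ r := by
    intro g
    have h1 : Tendsto (fun n => ‖s n - β g‖ ^ 2) atTop (𝓝 (‖a - β g‖ ^ 2)) :=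
      ((ha.sub_const _).norm).pow 2
    have h2 : Tendsto (fun n : ℕ => r + 1 / ((n : ℝ) + 1)) atTop (𝓝 r) := by
      simpa using hlim.const_add r
    exact le_of_tendsto_of_tendsto' h1 h2 (fun n => hs n g)
  refine ⟨-a, fun h => ?_⟩
  have hh : ∀ g, ‖(π h a + β h) - β g‖ ^ 2 ≤ r := by
    intro g
    have e : β g = β h + π h (β (h⁻¹ * g)) := by rw [← hβcoc, mul_inv_cancel_left]
    have e2 : (π h a + β h) - β g = π h (a - β (h⁻¹ * g)) := by
      rw [e, map_sub]; abel
    rw [e2, LinearIsometryEquiv.norm_map]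
    exact har _
  have h0 := key _ _ _ _ hh har
  have h1 : ‖π h a + β h - a‖ = 0 := by
    have : ‖π h a + β h - a‖ ^ 2 = 0 := le_antisymm (by linarith) (sq_nonneg _)
    exact pow_eq_zero_iff (two_ne_zero) |>.1 this
  rw [norm_eq_zero] at h1
  rw [map_neg]
  have h2 : β h = (π h a + β h - a) + (-π h a - -a) := by abel
  rw [h1, zero_add] at h2
  exact h2

end Helpers

/-- For the full unitary group `G = U(H)` of a complex Hilbert space `H`,
equipped with the strong operator topology, every continuous 1-cocycle of any continuous
unitary representation `(π, K)` of `G` is a 1-coboundary, i.e. `H¹(G, π, K) = {0}`. -/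
theorem unitaryGroup_sot_firstCohomology_vanishes
    {H : Type*} [NormedAddCommGroup H] [InnerProductSpace ℂ H] [CompleteSpace H]
    {K : Type*} [NormedAddCommGroup K] [InnerProductSpace ℂ K] [CompleteSpace K]
    -- `(π, K)` is a continuous unitary representation of `U(H)` with the SOT:
    (π : (H ≃ₗᵢ[ℂ] H) →* (K ≃ₗᵢ[ℂ] K))
    (hπ : ∀ v : K, @Continuous _ _ (strongOperatorTopology H) _ fun g => π g v)
    -- `β` is a continuous 1-cocycle:
    (β : (H ≃ₗᵢ[ℂ] H) → K) (hβcont : @Continuous _ _ (strongOperatorTopology H) _ β)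
    (hβcoc : ∀ g h : H ≃ₗᵢ[ℂ] H, β (g * h) = β g + π g (β h)) :
    -- then `β` is a 1-coboundary:
    ∃ v : K, ∀ g : H ≃ₗᵢ[ℂ] H, β g = π g v - v := by
  exact fixed_of_bounded π β hβcoc (cocycle_bounded π β hβcont hβcoc)
end

section
/- Fix n ∈ ℕ and, for an integer tuple μ, say that μ has property (P) if #{j : μ_j ≥ 0} ≥ n and #{j : μ_j ≤ 0} ≥ n. Then for every k ≥ n and every decreasingly ordered tuple λ = (λ_1 ≥ λ_2 ≥ … ≥ λ_{k+1}) ∈ ℤ^{k+1}, λ has property (P) if and only if there exists a decreasingly ordered tuple η = (η_1 ≥ … ≥ η_k) ∈ ℤ^k interlacing λ, i.e. λ_1 ≥ η_1 ≥ λ_2 ≥ η_2 ≥ … ≥ λ_k ≥ η_k ≥ λ_{k+1}, such that η has property (P). (That is, property (P) is interlacing-inheritable.) -/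
/-- Fix `n`.  For an integer tuple `μ`, property (P) says that at least `n`
entries of `μ` are `≥ 0` and at least `n` entries are `≤ 0`.  For every `k ≥ n` and every
decreasingly ordered `λ ∈ ℤ^{k+1}`, `λ` has property (P) if and only if there is a decreasingly
ordered `η ∈ ℤ^k` interlacing `λ` (i.e. `λ₁ ≥ η₁ ≥ λ₂ ≥ … ≥ λ_k ≥ η_k ≥ λ_{k+1}`) which has
property (P).  In other words, property (P) is interlacing-inheritable. -/
theorem property_P_interlacing_inheritable
    (n k : ℕ) (hnk : n ≤ k) (lam : Fin (k + 1) → ℤ) (hlam : Antitone lam) :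
    (n ≤ (Finset.univ.filter fun j => 0 ≤ lam j).card ∧
      n ≤ (Finset.univ.filter fun j => lam j ≤ 0).card)
    ↔ ∃ eta : Fin k → ℤ, Antitone eta ∧
        (∀ i : Fin k, eta i ≤ lam i.castSucc ∧ lam i.succ ≤ eta i) ∧
        (n ≤ (Finset.univ.filter fun j => 0 ≤ eta j).card ∧
          n ≤ (Finset.univ.filter fun j => eta j ≤ 0).card) := by
  have e1 : (Finset.univ.filter fun j => 0 ≤ lam j).card =
      (Finset.univ.filter fun j : Fin k => 0 ≤ lam j.castSucc).card +
        (if 0 ≤ lam (Fin.last k) then 1 else 0) := by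
    rw [Finset.card_filter, Finset.card_filter, Fin.sum_univ_castSucc]
  have e2 : (Finset.univ.filter fun j => lam j ≤ 0).card =
      (if lam 0 ≤ 0 then 1 else 0) +
      (Finset.univ.filter fun j : Fin k => lam j.succ ≤ 0).card := by
    rw [Finset.card_filter, Finset.card_filter, Fin.sum_univ_succ]
  have hstep : ∀ i : Fin k, lam i.succ ≤ lam i.castSucc := fun i =>
    hlam (Fin.castSucc_lt_succ).le
  constructor
  · rintro ⟨h1, h2⟩
    refine ⟨fun i => max (lam i.succ) (min (lam i.castSucc) 0), ?_, ?_, ?_, ?_⟩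
    · intro i j hij
      have a : lam j.succ ≤ lam i.succ := hlam (Fin.succ_le_succ_iff.mpr hij)
      have b : lam j.castSucc ≤ lam i.castSucc := hlam (Fin.castSucc_le_castSucc_iff.mpr hij)
      exact max_le_max a (min_le_min_right 0 b)
    · intro i
      exact ⟨max_le (hstep i) (min_le_left _ _), le_max_left _ _⟩
    · have : (Finset.univ.filter fun j : Fin k =>
          0 ≤ max (lam j.succ) (min (lam j.castSucc) 0)) =
          Finset.univ.filter fun j : Fin k => 0 ≤ lam j.castSucc := by
        ext j
        have := hstep j
        simp only [Finset.mem_filter, Finset.mem_univ, true_and]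
        omega
      rw [this]
      by_cases hl : 0 ≤ lam (Fin.last k)
      · rw [Finset.filter_true_of_mem fun j _ => hl.trans (hlam (Fin.le_last _))]
        simpa using hnk
      · rw [e1, if_neg hl] at h1
        exact h1
    · have : (Finset.univ.filter fun j : Fin k =>
          max (lam j.succ) (min (lam j.castSucc) 0) ≤ 0) =
          Finset.univ.filter fun j : Fin k => lam j.succ ≤ 0 := by
        ext j
        have := hstep j
        simp only [Finset.mem_filter, Finset.mem_univ, true_and]
        omega
      rw [this]
      by_cases hl : lam 0 ≤ 0
      · rw [Finset.filter_true_of_mem fun j _ => (hlam (Fin.zero_le _)).trans hl]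
        simpa using hnk
      · rw [e2, if_neg hl, zero_add] at h2
        exact h2
  · rintro ⟨eta, -, hi, h1, h2⟩
    constructor
    · rw [e1]
      refine (h1.trans (Finset.card_le_card ?_)).trans (Nat.le_add_right _ _)
      intro j
      simp only [Finset.mem_filter, Finset.mem_univ, true_and]
      exact fun h => h.trans (hi j).1
    · rw [e2]
      refine (h2.trans (Finset.card_le_card ?_)).trans (Nat.le_add_left _ _)
      intro j
      simp only [Finset.mem_filter, Finset.mem_univ, true_and]
      exact fun h => (hi j).2.trans h
end

section
/- Let H = ℓ²(ℕ,ℂ) with standard Hilbert basis (e_k)_{k∈ℕ}, and let G be the group of all unitary operators u on H such that u e_k = e_k for all but finitely many k (a realization of U(∞)). Define β : G → H by β(u) := Σ_k (u e_k − e_k), a sum with only finitely many nonzero terms. Then β satisfies the 1-cocycle relation β(uv) = β(u) + u β(v) for all u,v ∈ G, its restriction to each subgroup G_N := {u ∈ G : u e_k = e_k for all k > N} is the coboundary u ↦ u v_N − v_N with v_N = Σ_{k≤N} e_k, but there exists no vector v ∈ H with β(u) = u v − v for all u ∈ G. In particular, the first cohomology of the natural representation of U(∞) on ℓ²(ℕ,ℂ)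 (the highest weight representation with weight λ = (1,0,0,…)) does not vanish. -/
/-- Let `H = ℓ²(ℕ, ℂ)` with standard Hilbert basis `(e k)` and let
`U(∞)` be realized as the group of unitary operators (surjective linear isometries) `u` of `H`
with `u (e k) = e k` for all but finitely many `k`.  The map `β u := Σ_k (u (e k) - e k)`
(a finite sum) satisfies the 1-cocycle relation on `U(∞)`, its restriction to
`G_N = {u : u (e k) = e k for k > N}` is the coboundary of `v_N = Σ_{k ≤ N} e k`, but `β` is
not a 1-coboundary.  Hence the first cohomology of the natural representation of `U(∞)` on
`ℓ²(ℕ, ℂ)` (the highest weight representation of weight `(1,0,0,…)`) does not vanish. -/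
theorem uInfty_natural_representation_cocycle_not_coboundary
    (e : ℕ → lp (fun _ : ℕ => ℂ) 2) (he : ∀ k, e k = lp.single 2 k (1 : ℂ))
    (β : (lp (fun _ : ℕ => ℂ) 2 ≃ₗᵢ[ℂ] lp (fun _ : ℕ => ℂ) 2) → lp (fun _ : ℕ => ℂ) 2)
    (hβ : ∀ u, β u = ∑ᶠ k, (u (e k) - e k)) :
    -- the 1-cocycle relation holds on `U(∞)`:
    (∀ u v : lp (fun _ : ℕ => ℂ) 2 ≃ₗᵢ[ℂ] lp (fun _ : ℕ => ℂ) 2,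
      {k : ℕ | u (e k) ≠ e k}.Finite → {k : ℕ | v (e k) ≠ e k}.Finite →
      β (u * v) = β u + u (β v))
    ∧
    -- on `G_N` the cocycle `β` is the coboundary of `v_N = Σ_{k ≤ N} e k`:
    (∀ N : ℕ, ∀ u : lp (fun _ : ℕ => ℂ) 2 ≃ₗᵢ[ℂ] lp (fun _ : ℕ => ℂ) 2,
      (∀ k > N, u (e k) = e k) →
      β u = u (∑ k ∈ Finset.range (N + 1), e k) - ∑ k ∈ Finset.range (N + 1), e k)
    ∧
    -- but `β` is not a 1-coboundary on `U(∞)`: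
    ¬ ∃ v : lp (fun _ : ℕ => ℂ) 2,
        ∀ u : lp (fun _ : ℕ => ℂ) 2 ≃ₗᵢ[ℂ] lp (fun _ : ℕ => ℂ) 2,
          {k : ℕ | u (e k) ≠ e k}.Finite → β u = u v - v := by
  have h2 : ∀ N : ℕ, ∀ u : lp (fun _ : ℕ => ℂ) 2 ≃ₗᵢ[ℂ] lp (fun _ : ℕ => ℂ) 2,
      (∀ k > N, u (e k) = e k) →
      β u = u (∑ k ∈ Finset.range (N + 1), e k) - ∑ k ∈ Finset.range (N + 1), e k := by
    intro N u hu
    rw [hβ, finsum_eq_sum_of_support_subset (s := Finset.range (N + 1)), map_sum,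
      Finset.sum_sub_distrib]
    intro k hk
    by_contra hk'
    apply hk
    simp only [Finset.coe_range, Set.mem_Iio, not_lt] at hk'
    simp only [hu k (by omega), sub_self]
  have orth : ∀ j k : ℕ, inner ℂ (e j) (e k) = if j = k then (1 : ℂ) else 0 := by
    intro j k
    rw [he j, lp.inner_single_left, he k, lp.single_apply]
    by_cases h : j = k
    · subst h; simp
    · simp [h]
  refine ⟨?_, h2, ?_⟩
  · intro u v hu hv
    obtain ⟨N, hN⟩ := (hu.union hv).bddAbove
    have hu' : ∀ k > N, u (e k) = e k := by
      intro k hk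
      by_contra h
      exact absurd (hN (Or.inl h)) (by omega)
    have hv' : ∀ k > N, v (e k) = e k := by
      intro k hk
      by_contra h
      exact absurd (hN (Or.inr h)) (by omega)
    have huv : ∀ k > N, (u * v) (e k) = e k := by
      intro k hk
      change u (v (e k)) = e k
      rw [hv' k hk, hu' k hk]
    have hm : ∀ x, (u * v) x = u (v x) := fun _ => rfl
    rw [h2 N _ huv, h2 N u hu', h2 N v hv', hm, map_sub]
    abel
  · rintro ⟨v, hv⟩
    have key : ∀ n, v n = 1 := by
      intro n
      let u : lp (fun _ : ℕ => ℂ) 2 ≃ₗᵢ[ℂ] lp (fun _ : ℕ => ℂ) 2 :=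
        (Submodule.span ℂ {e n})ᗮ.reflection
      have hun : u (e n) = - e n := Submodule.reflection_orthogonalComplement_singleton_eq_neg _
      have huk : ∀ k, k ≠ n → u (e k) = e k := by
        intro k hk
        apply Submodule.reflection_mem_subspace_eq_self
        rw [Submodule.mem_orthogonal_singleton_iff_inner_right, orth, if_neg (Ne.symm hk)]
      have hfin : {k : ℕ | u (e k) ≠ e k}.Finite := by
        refine (Set.finite_singleton n).subset ?_
        intro k hk
        by_contra h
        exact hk (huk k h)
      have h1 := hv u hfin
      rw [hβ, finsum_eq_single _ n (fun k hk => by rw [huk k hk, sub_self]), hun] at h1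
      have h3 := congrArg (fun x => inner ℂ (e n) x) h1
      have h4 : inner ℂ (e n) (u v) = - inner ℂ (e n) v := by
        have := u.inner_map_map (e n) v
        rw [hun, inner_neg_left] at this
        rw [← this, neg_neg]
      have h5 : inner ℂ (e n) v = v n := by
        rw [he n, lp.inner_single_left]; simp
      simp only [inner_sub_right, inner_neg_right, h4, h5, orth, if_true] at h3
      linear_combination (1 / 2 : ℂ) * h3
    have hs := (lp.memℓp v).summable (by norm_num)
    simp only [key] at hs
    have ht := hs.tendsto_atTop_zero
    simp only [norm_one, Real.one_rpow] at ht
    exact one_ne_zero (tendsto_nhds_unique tendsto_const_nhds ht)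
end
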